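/- Let K/k be a field extension, 𝒟 a pseudo-tensor category over k, and 𝒟_K its extension of scalars (morphism spaces K ⊗_k 𝒟(−,−), followed by Karoubi completion). If a morphism f : X → Y of 𝒟 becomes split in 𝒟_K, then f is already split in 𝒟. -/

import Mathlib

open CategoryTheory CategoryTheory.Limits CategoryTheory.MonoidalCategory

universe v u

/-- A morphism `f` is split if there is `g` with `f ∘ g ∘ f = f`. -/
def IsSplit {C : Type u} [Category.{v} C] {X Y : C} (f : X ⟶ Y) : Prop :=
  ∃ g : Y ⟶ X, f ≫ g ≫ f = f

/-- The sequence `X₂ ⟶ X₁ ⟶ X₀ ⟶ 0` is exact, i.e. `q` is a cokernel of `p`. -/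
def IsCokernelSeq {C : Type u} [Category.{v} C] [Preadditive C] {X₂ X₁ X₀ : C}
    (p : X₂ ⟶ X₁) (q : X₁ ⟶ X₀) : Prop :=
  p ≫ q = 0 ∧ ∀ ⦃A : C⦄ (h : X₁ ⟶ A), p ≫ h = 0 → ∃! t : X₀ ⟶ A, q ≫ t = h

/-- The sequence `0 ⟶ X₀ ⟶ X₁ ⟶ X₂` is exact, i.e. `i` is a kernel of `p`. -/
def IsKernelSeq {C : Type u} [Category.{v} C] [Preadditive C] {X₀ X₁ X₂ : C}
    (i : X₀ ⟶ X₁) (p : X₁ ⟶ X₂) : Prop :=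
  i ≫ p = 0 ∧ ∀ ⦃A : C⦄ (h : A ⟶ X₁), h ≫ p = 0 → ∃! t : A ⟶ X₀, t ≫ i = h

/-- The morphism `ℰ_X = ev_X ⊗ id_{X⁰⊗X} − id_{X⁰⊗X} ⊗ ev_X`. -/
def calE {C : Type u} [Category.{v} C] [Preadditive C] [MonoidalCategory C]
    (X Xd : C) [ExactPairing X Xd] : (Xd ⊗ X) ⊗ (Xd ⊗ X) ⟶ Xd ⊗ X :=
  (ε_ X Xd ▷ (Xd ⊗ X)) ≫ (λ_ (Xd ⊗ X)).hom -
    ((Xd ⊗ X) ◁ ε_ X Xd) ≫ (ρ_ (Xd ⊗ X)).hom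

/-- `X` (with chosen dual `Xd`) is strongly faithful: `ev_X` is the cokernel of `ℰ_X`. -/
def StronglyFaithful {C : Type u} [Category.{v} C] [Preadditive C]
    [MonoidalCategory C] (X Xd : C) [ExactPairing X Xd] : Prop :=
  IsCokernelSeq (calE X Xd) (ε_ X Xd)

open TensorProduct

section Contraction

variable {R P M N : Type*} [CommSemiring R] [AddCommMonoid P] [AddCommMonoid M] [AddCommMonoid N]
  [Module R P] [Module R M] [Module R N]

/-- Contraction of the first tensor factor against a linear form `ε`. For a field extension `K/k`
and a form `ε` with `ε 1 = 1`, so that `K = k ⊕ ker ε`, it is the projection of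
`K ⊗ M = M ⊕ (ker ε ⊗ M)` onto `M`. -/
noncomputable def contractFst (ε : Module.Dual R P) : P ⊗[R] M →ₗ[R] M :=
  (TensorProduct.lid R M).toLinearMap ∘ₗ ε.rTensor M

@[simp]
lemma contractFst_tmul (ε : Module.Dual R P) (p : P) (m : M) :
    contractFst ε (p ⊗ₜ[R] m) = ε p • m :=
  rfl

lemma contractFst_comp_lTensor (ε : Module.Dual R P) (T : M →ₗ[R] N) :
    contractFst ε ∘ₗ T.lTensor P = T ∘ₗ contractFst ε :=
  TensorProduct.ext' fun p m => by simp

lemma mem_range_of_tmul_mem_range_lTensor {ε : Module.Dual R P} {p : P} (hε : ε p = 1)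
    {T : M →ₗ[R] N} {y : N} (hy : p ⊗ₜ[R] y ∈ LinearMap.range (T.lTensor P)) :
    y ∈ LinearMap.range T := by
  obtain ⟨t, ht⟩ := hy
  refine ⟨contractFst ε t, ?_⟩
  calc T (contractFst ε t)
      = contractFst ε (T.lTensor P t) := (LinearMap.congr_fun (contractFst_comp_lTensor ε T) t).symm
    _ = ε p • y := by rw [ht, contractFst_tmul]
    _ = y := by rw [hε, one_smul]

end Contraction

lemma isSplit_iff_mem_range (R : Type*) [Semiring R] {C : Type u} [Category.{v} C] [Preadditive C]
    [Linear R C] {X Y : C} (f : X ⟶ Y) :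
    IsSplit f ↔ f ∈ LinearMap.range (Linear.rightComp R X f ∘ₗ Linear.leftComp R X f) := by
  simp only [IsSplit, LinearMap.mem_range, LinearMap.comp_apply, Linear.leftComp_apply,
    Linear.rightComp_apply, Category.assoc]

theorem stmt16_general {k K : Type*} [CommSemiring k] [Semiring K] [Algebra k K]
    {ε : Module.Dual k K} (hε : ε 1 = 1)
    {C : Type u} [Category.{v} C] [Preadditive C] [Linear k C] {X Y : C} (f : X ⟶ Y)
    (hsplit : ∃ g : K ⊗[k] (Y ⟶ X),
      TensorProduct.map (LinearMap.id : K →ₗ[k] K)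
        ((Linear.rightComp k X f).comp (Linear.leftComp k X f)) g = (1 : K) ⊗ₜ[k] f) :
    IsSplit f :=
  (isSplit_iff_mem_range k f).mpr (mem_range_of_tmul_mem_range_lTensor hε hsplit)

/-- Let `K/k` be a field extension and `𝒟` a pseudo-tensor category over
`k`. If `f : X ⟶ Y` becomes split in the scalar extension `𝒟_K` (i.e. there is
`g ∈ K ⊗_k Hom(Y, X)` with `f ∘ g ∘ f = 1 ⊗ f`, where `f ∘ − ∘ f` is extended
`K`-linearly), then `f` is already split in `𝒟`. -/
theorem stmt16 {k K : Type*} [Field k] [Field K] [Algebra k K]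
    {C : Type u} [Category.{v} C] [Preadditive C] [Linear k C] [MonoidalCategory C]
    [SymmetricCategory C] [MonoidalPreadditive C] [MonoidalLinear k C] [RigidCategory C]
    [IsIdempotentComplete C]
    (hEnd : Function.Bijective fun a : k => a • (𝟙 (𝟙_ C)))
    {X Y : C} (f : X ⟶ Y)
    (hsplit : ∃ g : K ⊗[k] (Y ⟶ X),
      TensorProduct.map (LinearMap.id : K →ₗ[k] K)
        ((Linear.rightComp k X f).comp (Linear.leftComp k X f)) g = (1 : K) ⊗ₜ[k] f) :
    ∃ g₀ : Y ⟶ X, f ≫ g₀ ≫ f = f := by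
  obtain ⟨ε, hε⟩ := Module.Projective.exists_dual_eq_one k (one_ne_zero (α := K))
  exact stmt16_general hε f hsplit
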